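/- Let F = F_1 × ⋯ × F_m be a product Borel probability distribution on [0,∞)^m where each marginal F_j has the same mean μ > 0 and variance at most σ². Let F_Y be the distribution of the sum Y = v_1 + ⋯ + v_m of independent v_j ∼ F_j. Then the log-lottery on the full bundle with parameters (mμ, √m·σ) satisfies REV(P^log_{mμ,√m·σ};F_Y) ≥ OPT_m(F)/ρ(σ/(μ√m)); that is, full bundling achieves robust approximation ratio at most ρ(r/√m) where r = σ/μ. -/

import Mathlib

open MeasureTheory

/-- Revenue of posting price `p` against valuation distribution `F`:
`REV(p;F) = p · P(X ≥ p)`. -/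
noncomputable def rev (F : Measure ℝ) (p : ℝ) : ℝ :=
  p * (F (Set.Ici p)).toReal

/-- Optimal revenue `OPT(F) = sup_{p ≥ 0} p · P(X ≥ p)`. -/
noncomputable def opt (F : Measure ℝ) : ℝ :=
  ⨆ p ∈ Set.Ici (0 : ℝ), rev F p

/-- Revenue of a randomized pricing mechanism `A` (a measure over prices):
`REV(A;F) = E_{p∼A}[REV(p;F)]`. -/
noncomputable def mrev (A F : Measure ℝ) : ℝ :=
  ∫ p, rev F p ∂A

/-- `F` is a `(μ,σ)`-distributed distribution: a probability measure on `[0,∞)`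
with mean `m` and variance at most `s²`. -/
structure MeanVarLe (F : Measure ℝ) (m s : ℝ) : Prop where
  prob : IsProbabilityMeasure F
  supp : F (Set.Iio 0) = 0
  int_mean : Integrable (fun x => x) F
  int_sq : Integrable (fun x => x ^ 2) F
  mean : ∫ x, x ∂F = m
  var_le : ∫ x, (x - m) ^ 2 ∂F ≤ s ^ 2

/-- A randomized pricing mechanism: a probability measure over prices in `[0,∞)`. -/
def IsPriceMech (A : Measure ℝ) : Prop :=
  IsProbabilityMeasure A ∧ A (Set.Iio 0) = 0

/-- The log-lottery `P^log` with parameters `p1 ≤ p2`: the probability measure supported on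
`[p1,p2]` whose cdf on `[p1,p2)` is
`x ↦ (p2·ln(x/p1) − (x−p1)) / (p2·ln(p2/p1) − (p2−p1))`
(for `p1 = p2` this is the point mass at `p1`). -/
structure IsLogLottery (A : Measure ℝ) (p1 p2 : ℝ) : Prop where
  prob : IsProbabilityMeasure A
  supp : A (Set.Icc p1 p2) = 1
  cdf : ∀ x ∈ Set.Ico p1 p2,
    A (Set.Iic x) = ENNReal.ofReal
      ((p2 * Real.log (x / p1) - (x - p1)) / (p2 * Real.log (p2 / p1) - (p2 - p1)))

/-- A (direct revelation, possibly randomized) truthful selling mechanism for `m` items and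
a single additive buyer: an allocation rule `alloc : [0,∞)^m → [0,1]^m` and a payment rule
`pay : [0,∞)^m → [0,∞)` satisfying incentive compatibility and individual rationality. -/
structure TruthfulMech (m : ℕ) where
  alloc : (Fin m → ℝ) → Fin m → ℝ
  pay : (Fin m → ℝ) → ℝ
  alloc_meas : Measurable alloc
  pay_meas : Measurable pay
  alloc_nonneg : ∀ v i, 0 ≤ alloc v i
  alloc_le_one : ∀ v i, alloc v i ≤ 1
  pay_nonneg : ∀ v, 0 ≤ pay v
  ic : ∀ v w : Fin m → ℝ, (∀ i, 0 ≤ v i) → (∀ i, 0 ≤ w i) →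
    (∑ i, alloc w i * v i) - pay w ≤ (∑ i, alloc v i * v i) - pay v
  ir : ∀ v : Fin m → ℝ, (∀ i, 0 ≤ v i) → 0 ≤ (∑ i, alloc v i * v i) - pay v

/-- Expected revenue of a truthful `m`-item mechanism on the joint distribution `F`. -/
noncomputable def mrevM {m : ℕ} (M : TruthfulMech m) (F : Measure (Fin m → ℝ)) : ℝ :=
  ∫ v, M.pay v ∂F

/-- Optimal revenue `OPT_m(F)`: the supremum of expected revenue over all truthful
mechanisms for `m` items. -/
noncomputable def optM (m : ℕ) (F : Measure (Fin m → ℝ)) : ℝ :=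
  ⨆ M : TruthfulMech m, mrevM M F

/-!
Individual rationality caps the revenue of every mechanism by the expected total value `M`. The
density of the log-lottery, proportional to `p2 / p - 1` on `(p1, p2]`, is chosen so that the
revenue `∫_{p ≤ y} p dA` from a buyer of value `y` is a concave quadratic in `y` on `[p1, p2]` and
dominates that quadratic everywhere else. Its expectation is therefore bounded below through the
mean and the variance of the bundle value alone, and the equations defining `p1` and `p2` turn this
bound into `p1`. Finally `M / p1 = 1 + log (p2 / p1)` solves the equation that defines `ρ`.
-/

open ProbabilityTheory Set

/-! ### Distributions on the half-line with given mean and variance bound -/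

theorem meanVarLe_iff {F : Measure ℝ} [IsProbabilityMeasure F] {m s : ℝ} :
    MeanVarLe F m s ↔
      (∀ᵐ x ∂F, 0 ≤ x) ∧ MemLp id 2 F ∧ ∫ x, x ∂F = m ∧ Var[id; F] ≤ s ^ 2 := by
  have supp_iff : F (Iio 0) = 0 ↔ ∀ᵐ x ∂F, 0 ≤ x := by
    simp only [ae_iff, not_le]
    rfl
  have memLp_iff : MemLp id 2 F ↔ Integrable (fun x => x ^ 2) F :=
    memLp_two_iff_integrable_sq aestronglyMeasurable_id
  constructor
  · intro h
    refine ⟨supp_iff.1 h.supp, memLp_iff.2 h.int_sq, h.mean, ?_⟩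
    rw [variance_eq_integral aemeasurable_id]
    simpa only [id_eq, h.mean] using h.var_le
  · rintro ⟨hnonneg, hL2, rfl, hvar⟩
    refine ⟨‹_›, supp_iff.2 hnonneg, hL2.integrable one_le_two, memLp_iff.1 hL2, rfl, ?_⟩
    rwa [variance_eq_integral aemeasurable_id] at hvar

theorem meanVarLe_map_iff {Ω : Type*} [MeasurableSpace Ω] {P : Measure Ω} [IsProbabilityMeasure P]
    {X : Ω → ℝ} (hX : AEMeasurable X P) {m s : ℝ} :
    MeanVarLe (P.map X) m s ↔
      (∀ᵐ ω ∂P, 0 ≤ X ω) ∧ MemLp X 2 P ∧ ∫ ω, X ω ∂P = m ∧ Var[X; P] ≤ s ^ 2 := by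
  have := Measure.isProbabilityMeasure_map hX
  rw [meanVarLe_iff, ae_map_iff hX measurableSet_Ici,
    memLp_map_measure_iff aestronglyMeasurable_id hX, integral_map hX (by fun_prop),
    variance_id_map hX, Function.id_comp]

namespace MeanVarLe

variable {F : Measure ℝ} {m s : ℝ}

theorem memLp_id (hF : MeanVarLe F m s) : MemLp id 2 F :=
  have := hF.prob
  (meanVarLe_iff.1 hF).2.1

theorem variance_le (hF : MeanVarLe F m s) : Var[id; F] ≤ s ^ 2 :=
  have := hF.prob
  (meanVarLe_iff.1 hF).2.2.2

theorem integrable_const_sub_sq (hF : MeanVarLe F m s) (c : ℝ) :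
    Integrable (fun x => (c - x) ^ 2) F :=
  have := hF.prob
  ((memLp_const c).sub hF.memLp_id).integrable_sq

theorem integral_const_sub_sq_le (hF : MeanVarLe F m s) (c : ℝ) :
    ∫ x, (c - x) ^ 2 ∂F ≤ (c - m) ^ 2 + s ^ 2 := by
  have := hF.prob
  have hmean : ∫ x, (c - x) ∂F = c - m := by
    rw [integral_sub (integrable_const c) hF.int_mean, hF.mean]
    simp
  have hvar : Var[fun x => c - id x; F] = ∫ x, (c - x) ^ 2 ∂F - (∫ x, (c - x) ∂F) ^ 2 :=
    variance_eq_sub ((memLp_const c).sub hF.memLp_id)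
  rw [variance_const_sub aestronglyMeasurable_id, hmean] at hvar
  linarith [hF.variance_le]

theorem ae_eq_mean (hF : MeanVarLe F m 0) : ∀ᵐ x ∂F, x = m := by
  have := hF.prob
  have hvar : Var[id; F] = 0 :=
    le_antisymm (hF.variance_le.trans_eq (zero_pow two_ne_zero)) (variance_nonneg _ _)
  simpa only [id_eq, hF.mean] using ae_eq_integral_of_variance_eq_zero hF.memLp_id hvar

theorem rev_mean (hF : MeanVarLe F m 0) : rev F m = m := by
  have := hF.prob
  have hIci : F (Ici m) = 1 :=
    (prob_compl_eq_zero_iff measurableSet_Ici).1 (hF.ae_eq_mean.mono fun _ hx => hx.ge)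
  simp [rev, hIci]

theorem map_sum {ι Ω : Type*} [Fintype ι] [MeasurableSpace Ω] {P : Measure Ω}
    [IsProbabilityMeasure P] {X : ι → Ω → ℝ} {μ σ : ι → ℝ}
    (hlaw : ∀ i, MeanVarLe (P.map (X i)) (μ i) (σ i))
    (hindep : Pairwise fun i j => IndepFun (X i) (X j) P) :
    MeanVarLe (P.map fun ω => ∑ i, X i ω) (∑ i, μ i) √(∑ i, σ i ^ 2) := by
  have hX (i : ι) : AEMeasurable (X i) P :=
    have := (hlaw i).prob
    aemeasurable_of_map_neZero inferInstance
  choose hnonneg hL2 hmean hvar using fun i => (meanVarLe_map_iff (hX i)).1 (hlaw i)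
  rw [meanVarLe_map_iff (Finset.aemeasurable_fun_sum _ fun i _ => hX i)]
  refine ⟨?_, memLp_finsetSum _ fun i _ => hL2 i, ?_, ?_⟩
  · filter_upwards [ae_all_iff.2 hnonneg] with ω hω using Finset.sum_nonneg fun i _ => hω i
  · rw [integral_finsetSum _ fun i _ => (hL2 i).integrable one_le_two]
    exact Finset.sum_congr rfl fun i _ => hmean i
  · rw [Real.sq_sqrt (Finset.sum_nonneg fun i _ => sq_nonneg (σ i)), ← Finset.sum_fn,
      IndepFun.variance_sum (fun i _ => hL2 i) (hindep.set_pairwise _)]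
    exact Finset.sum_le_sum fun i _ => hvar i

section Pi

variable {ι : Type*} [Fintype ι] {Fs : ι → Measure ℝ} {μ σ : ι → ℝ}

theorem ae_nonneg_pi (hmarg : ∀ i, MeanVarLe (Fs i) (μ i) (σ i)) :
    ∀ᵐ v ∂Measure.pi Fs, ∀ i, 0 ≤ v i := by
  have := fun i => (hmarg i).prob
  exact ae_all_iff.2 fun i =>
    Measure.tendsto_eval_ae_ae.eventually (meanVarLe_iff.1 (hmarg i)).1

theorem map_sum_pi (hmarg : ∀ i, MeanVarLe (Fs i) (μ i) (σ i)) :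
    MeanVarLe ((Measure.pi Fs).map fun v => ∑ i, v i) (∑ i, μ i) √(∑ i, σ i ^ 2) := by
  have := fun i => (hmarg i).prob
  have hindep : iIndepFun (fun i (v : ι → ℝ) => v i) (Measure.pi Fs) :=
    iIndepFun_pi (X := fun _ => id) fun _ => aemeasurable_id
  exact map_sum (fun i => (measurePreserving_eval Fs i).map_eq.symm ▸ hmarg i)
    fun _ _ hij => hindep.indepFun hij

end Pi

theorem map_sum_pi_const {m : ℕ} {μ σ : ℝ} (hσ : 0 ≤ σ) {Fs : Fin m → Measure ℝ}
    (hmarg : ∀ j, MeanVarLe (Fs j) μ σ) :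
    MeanVarLe ((Measure.pi Fs).map fun v => ∑ j, v j) (m * μ) (√m * σ) := by
  simpa [Real.sqrt_sq hσ] using map_sum_pi hmarg

end MeanVarLe

/-! ### The surplus bound for truthful mechanisms -/

theorem TruthfulMech.pay_le_sum {m : ℕ} (M : TruthfulMech m) {v : Fin m → ℝ}
    (hv : ∀ i, 0 ≤ v i) : M.pay v ≤ ∑ i, v i :=
  calc M.pay v ≤ ∑ i, M.alloc v i * v i := sub_nonneg.1 (M.ir v hv)
    _ ≤ ∑ i, v i :=
      Finset.sum_le_sum fun i _ => mul_le_of_le_one_left (hv i) (M.alloc_le_one v i)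

theorem optM_le_integral_sum {m : ℕ} {F : Measure (Fin m → ℝ)} (hF : ∀ᵐ v ∂F, ∀ i, 0 ≤ v i)
    (hint : Integrable (fun v => ∑ i, v i) F) : optM m F ≤ ∫ v, ∑ i, v i ∂F := by
  refine Real.iSup_le (fun M => ?_) ?_
  · exact integral_mono_of_nonneg (ae_of_all _ M.pay_nonneg) hint
      (hF.mono fun _ => M.pay_le_sum)
  · exact integral_nonneg_of_ae (hF.mono fun _ hv => Finset.sum_nonneg fun i _ => hv i)

/-! ### Revenue from a buyer of known value -/

/-- The revenue of the randomized pricing `A` from a buyer whose value is known to be `y`: the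
buyer pays the drawn price `p` whenever `p ≤ y`. -/
noncomputable def exPostRevenue (A : Measure ℝ) (y : ℝ) : ℝ :=
  ∫ p in Iic y, p ∂A

section ExPostRevenue

variable {A F : Measure ℝ} [IsFiniteMeasure F]

theorem integrable_indicator_le_prod (hA : Integrable (fun p => p) A) :
    Integrable (Function.uncurry fun p y : ℝ => (Iic y).indicator (fun p => p) p) (A.prod F) :=
  (hA.comp_fst F).indicator (measurableSet_le measurable_fst measurable_snd)

variable [SFinite A]

theorem integrable_exPostRevenue (hA : Integrable (fun p => p) A) :
    Integrable (exPostRevenue A) F := by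
  unfold exPostRevenue
  simpa only [Function.uncurry_apply_pair, integral_indicator measurableSet_Iic]
    using (integrable_indicator_le_prod hA).integral_prod_right

theorem mrev_eq_integral_exPostRevenue (hA : Integrable (fun p => p) A) :
    mrev A F = ∫ y, exPostRevenue A y ∂F := by
  have inner (p : ℝ) : ∫ y, (Iic y).indicator (fun p => p) p ∂F = rev F p := by
    have : (fun y => (Iic y).indicator (fun p => p) p) = (Ici p).indicator fun _ => p := by
      ext y
      simp only [indicator, mem_Iic, mem_Ici]
    rw [this, integral_indicator_const p measurableSet_Ici, smul_eq_mul, mul_comm]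
    rfl
  calc mrev A F = ∫ p, ∫ y, (Iic y).indicator (fun p => p) p ∂F ∂A := by simp only [inner, mrev]
    _ = ∫ y, ∫ p, (Iic y).indicator (fun p => p) p ∂A ∂F :=
      integral_integral_swap (integrable_indicator_le_prod hA)
    _ = ∫ y, exPostRevenue A y ∂F := by
      simp only [integral_indicator measurableSet_Iic, exPostRevenue]

end ExPostRevenue

/-! ### The log-lottery -/

/-- The normalizing constant of the log-lottery on `[p1, p2]`, the denominator of its cdf. -/
noncomputable def logLotteryNorm (p1 p2 : ℝ) : ℝ :=
  p2 * Real.log (p2 / p1) - (p2 - p1)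

/-- The density on `(p1, p2]` of the log-lottery, for `p1 < p2`. -/
noncomputable def logLotteryDensity (p1 p2 x : ℝ) : ℝ :=
  (p2 / x - 1) / logLotteryNorm p1 p2

section Density

variable {p1 p2 : ℝ}

theorem logLotteryNorm_pos (h1 : 0 < p1) (h12 : p1 < p2) : 0 < logLotteryNorm p1 p2 := by
  have h2 : 0 < p2 := h1.trans h12
  have hlog : -Real.log (p2 / p1) < p1 / p2 - 1 := by
    rw [← Real.log_inv, inv_div]
    exact Real.log_lt_sub_one_of_pos (div_pos h1 h2) ((div_lt_one h2).2 h12).ne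
  calc 0 < p2 * (p1 / p2 - 1 - -Real.log (p2 / p1)) := mul_pos h2 (sub_pos.2 hlog)
    _ = logLotteryNorm p1 p2 := by
      rw [logLotteryNorm]
      field_simp
      ring

theorem logLotteryDensity_nonneg (h1 : 0 < p1) {x : ℝ} (hx : x ∈ Ioc p1 p2) :
    0 ≤ logLotteryDensity p1 p2 x :=
  div_nonneg (sub_nonneg.2 ((one_le_div (h1.trans hx.1)).2 hx.2))
    (logLotteryNorm_pos h1 (hx.1.trans_le hx.2)).le

theorem continuousOn_logLotteryDensity (h1 : 0 < p1) (b : ℝ) :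
    ContinuousOn (logLotteryDensity p1 p2) (Icc p1 b) :=
  ((continuousOn_const.div continuousOn_id fun _ hx => (h1.trans_le hx.1).ne').sub
    continuousOn_const).div_const _

theorem setIntegral_logLotteryDensity (h1 : 0 < p1) {b : ℝ} (hb : p1 ≤ b) :
    ∫ x in Ioc p1 b, logLotteryDensity p1 p2 x =
      (p2 * Real.log (b / p1) - (b - p1)) / logLotteryNorm p1 p2 := by
  have hderiv : ∀ x ∈ uIcc p1 b,
      HasDerivAt (fun x => (p2 * Real.log x - x) / logLotteryNorm p1 p2)
        (logLotteryDensity p1 p2 x) x := by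
    rw [uIcc_of_le hb]
    intro x hx
    have hx0 : x ≠ 0 := (h1.trans_le hx.1).ne'
    exact (((Real.hasDerivAt_log hx0).const_mul p2).sub (hasDerivAt_id x)).div_const _
  rw [← intervalIntegral.integral_of_le hb, intervalIntegral.integral_eq_sub_of_hasDerivAt hderiv
    ((continuousOn_logLotteryDensity h1 b).intervalIntegrable_of_Icc hb),
    Real.log_div (h1.trans_le hb).ne' h1.ne']
  ring

theorem lintegral_logLotteryDensity (h1 : 0 < p1) {b : ℝ} (hb1 : p1 ≤ b) (hb2 : b ≤ p2) :
    ∫⁻ x in Ioc p1 b, ENNReal.ofReal (logLotteryDensity p1 p2 x) =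
      ENNReal.ofReal ((p2 * Real.log (b / p1) - (b - p1)) / logLotteryNorm p1 p2) := by
  have hint : IntegrableOn (logLotteryDensity p1 p2) (Ioc p1 b) :=
    (continuousOn_logLotteryDensity h1 b).integrableOn_Icc.mono_set Ioc_subset_Icc_self
  rw [← setIntegral_logLotteryDensity h1 hb1, ofReal_integral_eq_lintegral_ofReal hint]
  filter_upwards [ae_restrict_mem measurableSet_Ioc] with x hx
    using logLotteryDensity_nonneg h1 ⟨hx.1, hx.2.trans hb2⟩

theorem setIntegral_logLotteryDensity_mul (h1 : 0 < p1) {b : ℝ} (hb : p1 ≤ b) :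
    ∫ x in Ioc p1 b, logLotteryDensity p1 p2 x * x =
      ((p2 - p1) ^ 2 - (p2 - b) ^ 2) / (2 * logLotteryNorm p1 p2) := by
  have hlinear : ∀ x ∈ Ioc p1 b,
      logLotteryDensity p1 p2 x * x = (p2 - x) / logLotteryNorm p1 p2 := by
    intro x hx
    have hx0 : x ≠ 0 := (h1.trans hx.1).ne'
    rw [logLotteryDensity, div_mul_eq_mul_div, sub_mul, div_mul_cancel₀ _ hx0, one_mul]
  rw [setIntegral_congr_fun measurableSet_Ioc hlinear, ← intervalIntegral.integral_of_le hb,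
    intervalIntegral.integral_div, intervalIntegral.integral_comp_sub_left (fun x => x) p2,
    integral_id, div_div]

end Density

namespace IsLogLottery

variable {A F : Measure ℝ} {p1 p2 : ℝ}

theorem ae_mem_Icc (hA : IsLogLottery A p1 p2) : ∀ᵐ p ∂A, p ∈ Icc p1 p2 :=
  have := hA.prob
  (prob_compl_eq_zero_iff measurableSet_Icc).2 hA.supp

theorem integrable_id (hA : IsLogLottery A p1 p2) : Integrable (fun p => p) A :=
  have := hA.prob
  Integrable.of_mem_Icc p1 p2 aemeasurable_id hA.ae_mem_Icc

theorem measure_Iic_of_lt (hA : IsLogLottery A p1 p2) {x : ℝ} (hx : x < p1) : A (Iic x) = 0 :=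
  measure_eq_zero_iff_ae_notMem.2 <|
    hA.ae_mem_Icc.mono fun _ hp hpx => (hx.trans_le hp.1).not_ge hpx

theorem measure_Iic_of_le (hA : IsLogLottery A p1 p2) {x : ℝ} (hx : p2 ≤ x) : A (Iic x) = 1 :=
  have := hA.prob
  (prob_compl_eq_zero_iff measurableSet_Iic).1 <|
    hA.ae_mem_Icc.mono fun _ hp => hp.2.trans hx

theorem eq_withDensity (hA : IsLogLottery A p1 p2) (h1 : 0 < p1) (h12 : p1 < p2) :
    A = (volume.restrict (Ioc p1 p2)).withDensity
      fun x => ENNReal.ofReal (logLotteryDensity p1 p2 x) := by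
  have := hA.prob
  refine Measure.ext_of_Iic _ _ fun x => ?_
  rw [withDensity_apply _ measurableSet_Iic, Measure.restrict_restrict measurableSet_Iic,
    inter_comm, Ioc_inter_Iic]
  rcases lt_or_ge x p1 with hx1 | hx1
  · rw [hA.measure_Iic_of_lt hx1, Ioc_eq_empty_of_le (inf_le_right.trans hx1.le),
      setLIntegral_empty]
  rcases lt_or_ge x p2 with hx2 | hx2
  · rw [inf_of_le_right hx2.le, lintegral_logLotteryDensity h1 hx1 hx2.le]
    exact hA.cdf x ⟨hx1, hx2⟩
  · rw [inf_of_le_left hx2, lintegral_logLotteryDensity h1 h12.le le_rfl, hA.measure_Iic_of_le hx2,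
      ← logLotteryNorm, div_self (logLotteryNorm_pos h1 h12).ne', ENNReal.ofReal_one]

theorem exPostRevenue_eq (hA : IsLogLottery A p1 p2) (h1 : 0 < p1) (h12 : p1 < p2) {y : ℝ}
    (hy : y ∈ Icc p1 p2) :
    exPostRevenue A y = ((p2 - p1) ^ 2 - (p2 - y) ^ 2) / (2 * logLotteryNorm p1 p2) := by
  have hmeas : Measurable fun x => ENNReal.ofReal (logLotteryDensity p1 p2 x) := by
    unfold logLotteryDensity
    fun_prop
  rw [exPostRevenue, hA.eq_withDensity h1 h12,
    setIntegral_withDensity_eq_setIntegral_toReal_smul hmeas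
      (ae_of_all _ fun _ => ENNReal.ofReal_lt_top) _ measurableSet_Iic,
    Measure.restrict_restrict measurableSet_Iic, Iic_inter_Ioc_of_le hy.2,
    ← setIntegral_logLotteryDensity_mul h1 hy.1]
  refine setIntegral_congr_fun measurableSet_Ioc fun x hx => ?_
  simp only [smul_eq_mul,
    ENNReal.toReal_ofReal (logLotteryDensity_nonneg h1 ⟨hx.1, hx.2.trans hy.2⟩)]

theorem quadratic_le_exPostRevenue (hA : IsLogLottery A p1 p2) (h1 : 0 < p1) (h12 : p1 < p2)
    (y : ℝ) :
    ((p2 - p1) ^ 2 - (p2 - y) ^ 2) / (2 * logLotteryNorm p1 p2) ≤ exPostRevenue A y := by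
  have hD : 0 ≤ 2 * logLotteryNorm p1 p2 := (mul_pos two_pos (logLotteryNorm_pos h1 h12)).le
  have hnonneg : ∀ᵐ p ∂A, 0 ≤ p := hA.ae_mem_Icc.mono fun p hp => h1.le.trans hp.1
  rcases lt_or_ge y p1 with hy1 | hy1
  · have hsq : (p2 - p1) ^ 2 ≤ (p2 - y) ^ 2 :=
      pow_le_pow_left₀ (sub_nonneg.2 h12.le) (sub_le_sub_left hy1.le p2) 2
    exact (div_nonpos_of_nonpos_of_nonneg (sub_nonpos.2 hsq) hD).trans
      (integral_nonneg_of_ae (ae_restrict_of_ae hnonneg))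
  rcases le_total y p2 with hy2 | hy2
  · exact (hA.exPostRevenue_eq h1 h12 ⟨hy1, hy2⟩).ge
  · calc ((p2 - p1) ^ 2 - (p2 - y) ^ 2) / (2 * logLotteryNorm p1 p2)
        ≤ ((p2 - p1) ^ 2 - (p2 - p2) ^ 2) / (2 * logLotteryNorm p1 p2) := by
          gcongr ((p2 - p1) ^ 2 - ?_) / (2 * logLotteryNorm p1 p2)
          simpa only [sub_self, zero_pow two_ne_zero] using sq_nonneg (p2 - y)
      _ = exPostRevenue A p2 := (hA.exPostRevenue_eq h1 h12 (right_mem_Icc.2 h12.le)).symm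
      _ ≤ exPostRevenue A y :=
        setIntegral_mono_set hA.integrable_id.integrableOn (ae_restrict_of_ae hnonneg)
          (Iic_subset_Iic.2 hy2).eventuallyLE

theorem quadratic_le_mrev (hA : IsLogLottery A p1 p2) (h1 : 0 < p1) (h12 : p1 < p2) {M S : ℝ}
    (hF : MeanVarLe F M S) :
    ((p2 - p1) ^ 2 - ((p2 - M) ^ 2 + S ^ 2)) / (2 * logLotteryNorm p1 p2) ≤ mrev A F := by
  have := hA.prob
  have := hF.prob
  have hD : 0 ≤ 2 * logLotteryNorm p1 p2 := (mul_pos two_pos (logLotteryNorm_pos h1 h12)).le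
  have hsq := hF.integrable_const_sub_sq p2
  calc ((p2 - p1) ^ 2 - ((p2 - M) ^ 2 + S ^ 2)) / (2 * logLotteryNorm p1 p2)
      ≤ ((p2 - p1) ^ 2 - ∫ y, (p2 - y) ^ 2 ∂F) / (2 * logLotteryNorm p1 p2) :=
        div_le_div_of_nonneg_right (sub_le_sub_left (hF.integral_const_sub_sq_le p2) _) hD
    _ = ∫ y, ((p2 - p1) ^ 2 - (p2 - y) ^ 2) / (2 * logLotteryNorm p1 p2) ∂F := by
        rw [integral_div, integral_sub (integrable_const _) hsq, integral_const, probReal_univ,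
          one_smul]
    _ ≤ ∫ y, exPostRevenue A y ∂F :=
        integral_mono (((integrable_const _).sub hsq).div_const _)
          (integrable_exPostRevenue hA.integrable_id) (hA.quadratic_le_exPostRevenue h1 h12)
    _ = mrev A F := (mrev_eq_integral_exPostRevenue hA.integrable_id).symm

theorem mrev_self {p : ℝ} (hA : IsLogLottery A p p) : mrev A F = rev F p := by
  have := hA.prob
  have hrev : ∀ᵐ q ∂A, rev F q = rev F p :=
    hA.ae_mem_Icc.mono fun q hq => by rw [le_antisymm hq.2 hq.1]
  rw [mrev, integral_congr_ae hrev, integral_const, probReal_univ, one_smul]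

end IsLogLottery

/-! ### The approximation ratio -/

/-- The equations determining the end points `p1 ≤ p2` of the log-lottery `P^log_{M,S}`, denoted
`π₁` and `π₂` in the paper. -/
structure IsLogLotteryPrices (M S p1 p2 : ℝ) : Prop where
  pos : 0 < p1
  le : p1 ≤ p2
  mean_eq : p1 * (1 + Real.log (p2 / p1)) = M
  sq_eq : p1 * (2 * p2 - p1) = M ^ 2 + S ^ 2

/-- The left-hand side of the equation defining `ρ(r)`, namely `momentOfRatio (ρ r) = r² + 1`. It is
the normalized second moment `(M² + S²) / M²` for which `P^log_{M,S}` guarantees the ratio `t`. -/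
noncomputable def momentOfRatio (t : ℝ) : ℝ :=
  (2 * Real.exp (t - 1) - 1) / t ^ 2

theorem hasDerivAt_momentOfRatio {t : ℝ} (ht : t ≠ 0) :
    HasDerivAt momentOfRatio (2 * (Real.exp (t - 1) * (t - 2) + 1) / t ^ 3) t := by
  have hnum : HasDerivAt (fun t => 2 * Real.exp (t - 1) - 1) (2 * Real.exp (t - 1)) t := by
    simpa only [mul_one, id_eq] using (((hasDerivAt_id t).sub_const 1).exp.const_mul 2).sub_const 1
  refine (hnum.div (hasDerivAt_pow 2 t) (pow_ne_zero 2 ht)).congr_deriv ?_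
  field_simp
  push_cast
  ring

theorem exp_sub_one_mul_sub_two_add_one_pos {t : ℝ} (ht : t ≠ 1) :
    0 < Real.exp (t - 1) * (t - 2) + 1 := by
  have h : 1 - t + 1 < Real.exp (1 - t) := Real.add_one_lt_exp (sub_ne_zero.2 ht.symm)
  calc 0 < Real.exp (t - 1) * (Real.exp (1 - t) - (1 - t + 1)) :=
        mul_pos (Real.exp_pos _) (sub_pos.2 h)
    _ = Real.exp (t - 1) * (t - 2) + Real.exp (t - 1 + (1 - t)) := by
        rw [Real.exp_add]
        ring
    _ = Real.exp (t - 1) * (t - 2) + 1 := by rw [sub_add_sub_cancel, sub_self, Real.exp_zero]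

theorem strictMonoOn_momentOfRatio : StrictMonoOn momentOfRatio (Ici 1) := by
  have hpos {t : ℝ} (ht : t ∈ Ici 1) : 0 < t := zero_lt_one.trans_le ht
  refine strictMonoOn_of_deriv_pos (convex_Ici 1)
    (fun t ht => (hasDerivAt_momentOfRatio (hpos ht).ne').continuousAt.continuousWithinAt) ?_
  rw [interior_Ici]
  intro t ht
  have ht0 : 0 < t := hpos (Ioi_subset_Ici_self ht)
  rw [(hasDerivAt_momentOfRatio ht0.ne').deriv]
  have := exp_sub_one_mul_sub_two_add_one_pos (ne_of_gt ht)
  positivity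

namespace IsLogLotteryPrices

variable {M S p1 p2 : ℝ}

theorem one_le_ratio (h : IsLogLotteryPrices M S p1 p2) : 1 ≤ 1 + Real.log (p2 / p1) :=
  le_add_of_nonneg_right (Real.log_nonneg ((one_le_div h.pos).2 h.le))

theorem mean_pos (h : IsLogLotteryPrices M S p1 p2) : 0 < M :=
  h.mean_eq ▸ mul_pos h.pos (one_pos.trans_le h.one_le_ratio)

theorem momentOfRatio_eq (h : IsLogLotteryPrices M S p1 p2) :
    momentOfRatio (1 + Real.log (p2 / p1)) = (S / M) ^ 2 + 1 := by
  have hp1 : p1 ≠ 0 := h.pos.ne'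
  have hM : M ≠ 0 := h.mean_pos.ne'
  have hratio : 1 + Real.log (p2 / p1) = M / p1 := by
    rw [← h.mean_eq, mul_div_cancel_left₀ _ hp1]
  calc momentOfRatio (1 + Real.log (p2 / p1)) = (2 * (p2 / p1) - 1) / (M / p1) ^ 2 := by
        rw [momentOfRatio, add_sub_cancel_left, Real.exp_log (div_pos (h.pos.trans_le h.le) h.pos),
          hratio]
    _ = p1 * (2 * p2 - p1) / M ^ 2 := by field_simp
    _ = (S / M) ^ 2 + 1 := by
        rw [h.sq_eq]
        field_simp
        ring

theorem eq_mul_ratio (h : IsLogLotteryPrices M S p1 p2) {ρ : ℝ} (hρ1 : 1 ≤ ρ)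
    (hρ2 : momentOfRatio ρ = (S / M) ^ 2 + 1) : M = p1 * ρ := by
  rw [← h.mean_eq, strictMonoOn_momentOfRatio.injOn h.one_le_ratio hρ1
    (h.momentOfRatio_eq.trans hρ2.symm)]

theorem quadratic_eq (h : IsLogLotteryPrices M S p1 p2) :
    (p2 - p1) ^ 2 - ((p2 - M) ^ 2 + S ^ 2) = p1 * (2 * logLotteryNorm p1 p2) := by
  rw [logLotteryNorm]
  linear_combination h.sq_eq - 2 * p2 * h.mean_eq

theorem le_mrev (h : IsLogLotteryPrices M S p1 p2) {A F : Measure ℝ} (hA : IsLogLottery A p1 p2)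
    (hF : MeanVarLe F M S) : p1 ≤ mrev A F := by
  rcases h.le.eq_or_lt with rfl | h12
  · have hM : M = p1 := by simpa [h.pos.ne'] using h.mean_eq.symm
    have hS : S = 0 := by
      have hsq := h.sq_eq
      rw [hM] at hsq
      exact pow_eq_zero_iff two_ne_zero |>.1 (by linarith)
    subst hM hS
    rw [hA.mrev_self, hF.rev_mean]
  · have hbound := hA.quadratic_le_mrev h.pos h12 hF
    rwa [h.quadratic_eq, mul_div_cancel_right₀ _
      (mul_pos two_pos (logLotteryNorm_pos h.pos h12)).ne'] at hbound

end IsLogLotteryPrices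

theorem sqrt_mul_div_mul (n μ σ : ℝ) : √n * σ / (n * μ) = σ / (μ * √n) := by
  rw [mul_div_mul_comm, Real.sqrt_div_self', div_mul_div_comm, one_mul, mul_comm √n]

theorem stmt16_general {m : ℕ} {F : Measure (Fin m → ℝ)} {M S ρ p1 p2 : ℝ} {A : Measure ℝ}
    (hF : ∀ᵐ v ∂F, ∀ i, 0 ≤ v i) (hsum : MeanVarLe (F.map fun v => ∑ i, v i) M S)
    (hρ1 : 1 ≤ ρ) (hρ2 : momentOfRatio ρ = (S / M) ^ 2 + 1)
    (hp : IsLogLotteryPrices M S p1 p2) (hA : IsLogLottery A p1 p2) :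
    optM m F / ρ ≤ mrev A (F.map fun v => ∑ i, v i) := by
  have hmeas : AEMeasurable (fun v : Fin m → ℝ => ∑ i, v i) F := by fun_prop
  have hint : Integrable (fun v => ∑ i, v i) F :=
    (integrable_map_measure aestronglyMeasurable_id hmeas).1 hsum.int_mean
  have hmean : ∫ v, ∑ i, v i ∂F = M := by
    rw [← hsum.mean, integral_map hmeas (by fun_prop)]
  rw [div_le_iff₀ (one_pos.trans_le hρ1)]
  calc optM m F ≤ ∫ v, ∑ i, v i ∂F := optM_le_integral_sum hF hint
    _ = p1 * ρ := hmean.trans (hp.eq_mul_ratio hρ1 hρ2)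
    _ ≤ mrev A (F.map fun v => ∑ i, v i) * ρ :=
      mul_le_mul_of_nonneg_right (hp.le_mrev hA hsum) (zero_le_one.trans hρ1)

/-- Let `F = F_1 × ⋯ × F_m` be a product distribution on `[0,∞)^m` where
each `F_j` has mean `μ > 0` and variance at most `σ²`, and let `F_Y` be the distribution of
the sum of the independent item values. Then the log-lottery on the full bundle with
parameters `(mμ, √m·σ)` satisfies `REV(P^log_{mμ,√m·σ};F_Y) ≥ OPT_m(F)/ρ(σ/(μ√m))`:
full bundling achieves robust approximation ratio at most `ρ(r/√m)` with `r = σ/μ`. -/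
theorem stmt16 (m : ℕ) (hm : 0 < m) (μ σ : ℝ) (hμ : 0 < μ) (hσ : 0 ≤ σ)
    (Fs : Fin m → Measure ℝ) (hmarg : ∀ j, MeanVarLe (Fs j) μ σ)
    (ρ : ℝ) (hρ1 : 1 ≤ ρ)
    (hρ2 : (2 * Real.exp (ρ - 1) - 1) / ρ ^ 2 = (σ / (μ * Real.sqrt m)) ^ 2 + 1)
    (A : Measure ℝ)
    (hA : ∃ p1 p2 : ℝ, 0 < p1 ∧ p1 ≤ p2 ∧
      p1 * (1 + Real.log (p2 / p1)) = m * μ ∧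
      p1 * (2 * p2 - p1) = (m * μ) ^ 2 + (Real.sqrt m * σ) ^ 2 ∧
      IsLogLottery A p1 p2) :
    optM m (Measure.pi Fs) / ρ ≤
      mrev A ((Measure.pi Fs).map (fun v => ∑ j, v j)) := by
  obtain ⟨p1, p2, h1, h12, hmean, hsq, hlottery⟩ := hA
  exact stmt16_general (MeanVarLe.ae_nonneg_pi hmarg) (MeanVarLe.map_sum_pi_const hσ hmarg) hρ1
    (by rwa [sqrt_mul_div_mul]) ⟨h1, h12, hmean, hsq⟩ hlottery
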